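/- arXiv:2006.09492 — 3 statements merged into one kernel-verified Lean document; each statement's English description precedes it below -/
import Mathlib

section
/- For n ∈ ℕ and k ∈ {0,…,n−1}, the internal solid angle of the n-dimensional regular crosspolytope at a k-dimensional face equals P(√(k+1)·ξ_{n−k} ≥ |ξ_1|+…+|ξ_{n−k−1}|), where ξ_1,…,ξ_{n−k} are i.i.d. standard normal. -/
open Finset MeasureTheory ProbabilityTheory

/-- A scaled sum of i.i.d. standard normal variables is centered normal. -/
theorem measurePreserving_const_mul_sum_gaussianReal {ι : Type*} [Fintype ι] (c : ℝ) (v : NNReal)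
    (hv : (v : ℝ) = c ^ 2 * Fintype.card ι) :
    MeasurePreserving (fun x : ι → ℝ => c * ∑ i, x i)
      (Measure.pi fun _ : ι => gaussianReal 0 1) (gaussianReal 0 v) := by
  have hm : Measurable (fun x : ι → ℝ => c * ∑ i, x i) := by fun_prop
  refine ⟨hm, Measure.ext_of_charFun ?_⟩
  ext t
  rw [charFun_map_mul_comp (by fun_prop), charFun_map_sum_pi_eq_prod]
  simp only [Finset.prod_apply,
    charFun_gaussianReal, Finset.prod_const, Finset.card_univ, ← Complex.exp_nat_mul]
  congr 1
  have : ((v : ℝ) : ℂ) = c ^ 2 * Fintype.card ι := by rw [hv]; push_cast; rfl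
  rw [this]
  push_cast
  ring

/-- Splitting the coordinates of a product of identical probability measures along an equivalence
preserves the measure. -/
theorem measurePreserving_pi_split {ι κ δ : Type*} [Fintype ι] [Fintype κ] [Fintype δ]
    (μ : Measure ℝ) [IsProbabilityMeasure μ] (e : κ ⊕ δ ≃ ι) :
    MeasurePreserving (fun x : ι → ℝ => ((fun i => x (e (.inl i))), (fun j => x (e (.inr j)))))
      (Measure.pi fun _ : ι => μ)
      ((Measure.pi fun _ : κ => μ).prod (Measure.pi fun _ : δ => μ)) :=
  (measurePreserving_sumPiEquivProdPi (fun _ : κ ⊕ δ => μ)).comp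
    (measurePreserving_piCongrLeft (fun _ : ι => μ) e).symm

/-- Collapsing one block of coordinates of a standard Gaussian vector to a scaled sum. -/
theorem measurePreserving_gaussian_split {ι κ δ : Type*} [Fintype ι] [Fintype κ] [Fintype δ]
    (e : κ ⊕ δ ≃ ι) (c : ℝ) (v : NNReal) (hv : (v : ℝ) = c ^ 2 * Fintype.card κ) :
    MeasurePreserving (fun x : ι → ℝ => (c * ∑ i, x (e (.inl i)), (fun j => x (e (.inr j)))))
      (Measure.pi fun _ : ι => gaussianReal 0 1)
      ((gaussianReal 0 v).prod (Measure.pi fun _ : δ => gaussianReal 0 1)) :=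
  ((measurePreserving_const_mul_sum_gaussianReal c v hv).prod
    (MeasurePreserving.id _)).comp (measurePreserving_pi_split _ e)

/-- The tangent cone of the crosspolytope at the centroid of the face spanned by the vertices
`e i` with `i` satisfying `p`. -/
theorem crosspolytope_tangentCone_iff {ι : Type*} [Fintype ι] (p : ι → Prop) [DecidablePred p]
    (a : ℝ) (ha : 0 < a) (hsum : ∑ i, (if p i then a else 0) = 1) (v : ι → ℝ) :
    (∃ ε : ℝ, 0 < ε ∧ ∑ i, |(if p i then a else 0) + ε * v i| ≤ 1) ↔
      ∑ i, (if p i then v i else |v i|) ≤ 0 := by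
  constructor
  · rintro ⟨ε, hε, h⟩
    have h1 : ∑ i, ((if p i then a else 0) + ε * (if p i then v i else |v i|)) ≤ 1 := by
      refine (Finset.sum_le_sum fun i _ => ?_).trans h
      split_ifs
      · exact le_abs_self _
      · rw [zero_add, zero_add, abs_mul, abs_of_pos hε]
    rw [Finset.sum_add_distrib, hsum, ← Finset.mul_sum] at h1
    by_contra hc
    have := mul_pos hε (not_le.1 hc)
    linarith
  · intro h
    have hS : 0 ≤ ∑ i, |v i| := Finset.sum_nonneg fun _ _ => abs_nonneg _
    have hε : 0 < a / (1 + ∑ i, |v i|) := by positivity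
    refine ⟨a / (1 + ∑ i, |v i|), hε, ?_⟩
    set ε := a / (1 + ∑ i, |v i|) with hεdef
    have hεS : ε * (1 + ∑ i, |v i|) = a := by
      rw [hεdef]
      field_simp
    have h1 : ∑ i, |(if p i then a else 0) + ε * v i|
        = ∑ i, ((if p i then a else 0) + ε * (if p i then v i else |v i|)) := by
      refine Finset.sum_congr rfl fun i _ => ?_
      split_ifs
      · refine abs_of_nonneg ?_
        have h2 : |v i| ≤ ∑ i, |v i| :=
          Finset.single_le_sum (f := fun i => |v i|) (fun _ _ => abs_nonneg _) (Finset.mem_univ i)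
        have h3 := neg_abs_le (v i)
        nlinarith
      · rw [zero_add, zero_add, abs_mul, abs_of_pos hε]
    rw [h1, Finset.sum_add_distrib, hsum, ← Finset.mul_sum]
    nlinarith

theorem stmt9 (n k : ℕ) (hn : 1 ≤ n) (hk : k < n) :
    (Measure.pi fun _ : Fin n => gaussianReal 0 1)
      {v : Fin n → ℝ | ∃ ε : ℝ, 0 < ε ∧
        ((fun i : Fin n => if (i : ℕ) < k + 1 then 1 / ((k : ℝ) + 1) else 0) + ε • v)
          ∈ {u : Fin n → ℝ | ∑ j, |u j| ≤ 1}}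
    = (Measure.pi fun _ : Fin (n - k) => gaussianReal 0 1)
      {x : Fin (n - k) → ℝ |
        ∑ j : Fin (n - k), (if (j : ℕ) < n - k - 1 then |x j| else 0)
          ≤ Real.sqrt ((k : ℝ) + 1) * x ⟨n - k - 1, by omega⟩} := by
  have hk0 : (0 : ℝ) < (k : ℝ) + 1 := by positivity
  let e₁ : Fin (k + 1) ⊕ Fin (n - k - 1) ≃ Fin n :=
    finSumFinEquiv.trans (finCongr (by omega))
  let e₂ : Fin 1 ⊕ Fin (n - k - 1) ≃ Fin (n - k) :=
    (Equiv.sumComm _ _).trans (finSumFinEquiv.trans (finCongr (by omega)))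
  have e₁l (i : Fin (k + 1)) : (e₁ (.inl i) : ℕ) = i := by simp [e₁]
  have e₁r (j : Fin (n - k - 1)) : (e₁ (.inr j) : ℕ) = k + 1 + j := by simp [e₁]
  have hr (j : Fin (n - k - 1)) : ¬ k + 1 + (j : ℕ) < k + 1 := by omega
  have e₂l (i : Fin 1) : (e₂ (.inl i) : ℕ) = n - k - 1 := by simp [e₂]
  have e₂r (j : Fin (n - k - 1)) : (e₂ (.inr j) : ℕ) = j := by simp [e₂]
  have h₁ := measurePreserving_gaussian_split e₁ 1 ((k : NNReal) + 1) (by simp)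
  have h₂ := measurePreserving_gaussian_split e₂ (-Real.sqrt ((k : ℝ) + 1)) ((k : NNReal) + 1)
    (by simp [Real.sq_sqrt hk0.le])
  let A : Set (ℝ × (Fin (n - k - 1) → ℝ)) := {q | q.1 + ∑ j, |q.2 j| ≤ 0}
  have hA : MeasurableSet A := measurableSet_le (by fun_prop) (by fun_prop)
  have hsum : ∑ i : Fin n, (if (i : ℕ) < k + 1 then 1 / ((k : ℝ) + 1) else 0) = 1 := by
    rw [← e₁.sum_comp, Fintype.sum_sum_type]
    simp only [e₁l, e₁r, Fin.is_lt, hr, if_true, if_false]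
    simp [hk0.ne']
  calc _ = _ := ?_
    _ = _ := (h₁.measure_preimage hA.nullMeasurableSet).trans
      (h₂.measure_preimage hA.nullMeasurableSet).symm
    _ = _ := ?_
  · congr 1
    ext v
    refine (crosspolytope_tangentCone_iff (fun i : Fin n => (i : ℕ) < k + 1) _ (by positivity)
      hsum v).trans ?_
    rw [← e₁.sum_comp, Fintype.sum_sum_type]
    simp only [e₁l, e₁r, Fin.is_lt, hr, if_true, if_false]
    simp [A]
  · congr 1
    ext x
    have hlast : e₂ (.inl 0) = ⟨n - k - 1, by omega⟩ := Fin.ext (e₂l 0)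
    simp only [Set.mem_ofPred_eq, Set.mem_preimage, A]
    rw [← e₂.sum_comp, Fintype.sum_sum_type]
    simp only [e₂l, e₂r, Fin.is_lt, lt_irrefl, if_true, if_false, Fin.sum_univ_one, hlast]
    constructor <;> intro h <;> linarith
end

section
/- Let f := σe_{n+1} + Σ_{i=k}^n e_i be a relative interior point of a k-dimensional face F of C_n^□(σ²). Then the tangent cone of C_n^□(σ²) at F is {v ∈ ℝ^{n+1} : max_{k≤i≤n} v_i ≤ v_{n+1}/σ}, and its polar (the normal cone at F) is the positive hull of the vectors −(1/σ)e_{n+1} + e_j, j = k,…,n. -/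
open Finset Matrix

theorem exists_pos_forall_mul_abs_le {ι : Type*} [Fintype ι] (v : ι → ℝ) {ε : ℝ} (hε : 0 < ε) :
    ∃ δ : ℝ, 0 < δ ∧ ∀ j, δ * |v j| ≤ ε := by
  have hS : 0 ≤ ∑ j, |v j| := Finset.sum_nonneg fun j _ => abs_nonneg _
  refine ⟨ε / (1 + ∑ j, |v j|), by positivity, fun j => ?_⟩
  have hj : |v j| ≤ ∑ j, |v j| :=
    Finset.single_le_sum (f := fun j => |v j|) (fun j _ => abs_nonneg _) (Finset.mem_univ j)
  rw [div_mul_eq_mul_div, div_le_iff₀ (by positivity)]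
  exact mul_le_mul_of_nonneg_left (by linarith) hε.le

theorem sum_smul_generator_castSucc {n : ℕ} (a : ℝ) (c : Fin n → ℝ) (j : Fin n) :
    (∑ i : Fin n, c i • (fun j : Fin (n + 1) =>
      (if (j : ℕ) = n then a else 0) + (if (j : ℕ) = (i : ℕ) then (1 : ℝ) else 0))) j.castSucc
      = c j := by
  simp [Finset.sum_apply, j.2.ne, ← Fin.ext_iff]

theorem sum_smul_generator_last {n : ℕ} (a : ℝ) (c : Fin n → ℝ) :
    (∑ i : Fin n, c i • (fun j : Fin (n + 1) =>
      (if (j : ℕ) = n then a else 0) + (if (j : ℕ) = (i : ℕ) then (1 : ℝ) else 0))) (Fin.last n)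
      = (∑ i, c i) * a := by
  simp [Finset.sum_apply, Finset.sum_mul, fun i : Fin n => i.2.ne']

/-- Let `f = σ e_{n+1} + Σ_{i=k}^n e_i` be a relative interior point of a `k`-dimensional face
`F` of `C_n^□(σ²) = {x ∈ ℝ^{n+1} : x_{n+1} ≥ σ max_i |x_i|}`. Then the tangent cone at `F` is
`{v : max_{k ≤ i ≤ n} v_i ≤ v_{n+1}/σ}`, and its polar (the normal cone at `F`) is the positive
hull of the vectors `-(1/σ) e_{n+1} + e_j`, `j = k, …, n`. -/
theorem stmt11 (n k : ℕ) (hk : 1 ≤ k) (hkn : k ≤ n) (σ : ℝ) (hσ : 0 < σ) :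
    ({v : Fin (n + 1) → ℝ | ∃ δ : ℝ, 0 < δ ∧
        ((fun j : Fin (n + 1) => if (j : ℕ) = n then σ
            else if k - 1 ≤ (j : ℕ) then (1 : ℝ) else 0) + δ • v)
          ∈ {x : Fin (n + 1) → ℝ | ∀ i : Fin n, σ * |x i.castSucc| ≤ x (Fin.last n)}}
      = {v : Fin (n + 1) → ℝ | ∀ i : Fin n, k - 1 ≤ (i : ℕ) →
          v i.castSucc ≤ v (Fin.last n) / σ}) ∧
    {y : Fin (n + 1) → ℝ |
        ∀ v ∈ {v : Fin (n + 1) → ℝ | ∀ i : Fin n, k - 1 ≤ (i : ℕ) →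
            v i.castSucc ≤ v (Fin.last n) / σ},
          y ⬝ᵥ v ≤ 0}
      = {y : Fin (n + 1) → ℝ | ∃ c : Fin n → ℝ, (∀ i, 0 ≤ c i) ∧
          (∀ i : Fin n, (i : ℕ) < k - 1 → c i = 0) ∧
          y = ∑ i : Fin n, c i • (fun j : Fin (n + 1) =>
            (if (j : ℕ) = n then -(1 / σ) else 0) + (if (j : ℕ) = (i : ℕ) then 1 else 0))} := by
  refine ⟨?_, ?_⟩
  · ext v
    simp only [Set.mem_ofPred_eq, Pi.add_apply, Pi.smul_apply, smul_eq_mul, Fin.val_castSucc,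
      Fin.val_last, if_true, fun i : Fin n => i.2.ne, if_false]
    constructor
    · rintro ⟨δ, hδ, h⟩ i hi
      have h1 := h i
      rw [if_pos hi] at h1
      have h2 := mul_le_mul_of_nonneg_left (le_abs_self (1 + δ * v i.castSucc)) hσ.le
      rw [le_div_iff₀ hσ]
      refine le_of_mul_le_mul_left ?_ hδ
      linarith
    · intro h
      obtain ⟨δ, hδ, hb⟩ := exists_pos_forall_mul_abs_le v (ε := min (1 / 2) (σ / 2)) (by positivity)
      have hb' (j) : |δ * v j| ≤ min (1 / 2) (σ / 2) := by
        rw [abs_mul, abs_of_pos hδ]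
        exact hb j
      refine ⟨δ, hδ, fun i => ?_⟩
      have hi := (hb' i.castSucc).trans (min_le_left _ _)
      split_ifs with hki
      · have h1 := h i hki
        rw [le_div_iff₀ hσ] at h1
        have h2 := mul_le_mul_of_nonneg_left h1 hδ.le
        rw [abs_of_nonneg (by linarith [(abs_le.1 hi).1])]
        linarith
      · have hl := (abs_le.1 ((hb' (Fin.last n)).trans (min_le_right _ _))).1
        have h2 := mul_le_mul_of_nonneg_left hi hσ.le
        rw [zero_add]
        linarith
  · ext y
    simp only [Set.mem_ofPred_eq]
    constructor
    · intro h
      have hneg (i : Fin n) : 0 ≤ y i.castSucc := by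
        have := h (Pi.single i.castSucc (-1)) fun j _ => by
          rw [Pi.single_eq_of_ne (Fin.castSucc_lt_last i).ne', zero_div]
          by_cases hj : j = i
          · simp [hj]
          · simp [hj]
        rw [dotProduct_single] at this
        linarith
      have hpos (i : Fin n) (hi : (i : ℕ) < k - 1) : y i.castSucc ≤ 0 := by
        have := h (Pi.single i.castSucc 1) fun j hj => by
          have hji : j ≠ i := by rintro rfl; omega
          rw [Pi.single_eq_of_ne (Fin.castSucc_lt_last i).ne', zero_div]
          simp [hji]
        rwa [dotProduct_single, mul_one] at this
      have hline (t : ℝ) : (∑ i : Fin n, y i.castSucc) * t + y (Fin.last n) * (σ * t) ≤ 0 := by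
        have := h (Fin.snoc (fun _ : Fin n => t) (σ * t) : Fin (n + 1) → ℝ) fun j _ => by
          simp [hσ.ne']
        simpa [dotProduct, Fin.sum_univ_castSucc, ← Finset.sum_mul] using this
      refine ⟨fun i => y i.castSucc, hneg, fun i hi => (hpos i hi).antisymm (hneg i), ?_⟩
      ext j
      induction j using Fin.lastCases with
      | last =>
        rw [sum_smul_generator_last]
        have h1 := hline 1
        have h2 := hline (-1)
        field_simp
        linarith
      | cast j => rw [sum_smul_generator_castSucc]
    · rintro ⟨c, hc, hc0, rfl⟩ v hv
      rw [dotProduct, Fin.sum_univ_castSucc, sum_smul_generator_last]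
      simp only [sum_smul_generator_castSucc]
      rw [mul_assoc, Finset.sum_mul, ← Finset.sum_add_distrib]
      refine Finset.sum_nonpos fun i _ => ?_
      rcases lt_or_ge (i : ℕ) (k - 1) with hi | hi
      · simp [hc0 i hi]
      · have := mul_le_mul_of_nonneg_left (hv i hi) (hc i)
        rw [div_eq_mul_one_div] at this
        linarith
end

section
/- Let P ⊂ ℝ^n be an n-dimensional polytope with 0 in its interior, S a linear subspace of codimension l ∈ {1,…,n−1} in general position with respect to the affine hulls of all faces of P, and j ∈ {0,…,n−l−1}. If B_1, B_2 are distinct (j+l)-dimensional faces of P with B_1 ∩ S ≠ ∅, then B_1 ∩ S ≠ B_2 ∩ S. -/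
open Finset

variable {V : Type*} [AddCommGroup V] [Module ℝ V]

/-- Dimension of an affine subspace: the rank of its direction. -/
noncomputable def adim (A : AffineSubspace ℝ V) : ℕ := Module.finrank ℝ A.direction

/-- `S` (of codimension `l`) is in general position with respect to the affine subspace `A`:
if `A` is nonempty, then `S ∩ A` is empty when `dim A < l`, and is nonempty of dimension
`dim A − l` otherwise. -/
def GenPos (l : ℕ) (S A : AffineSubspace ℝ V) : Prop :=
  (A : Set V).Nonempty →
    ((adim A < l → S ⊓ A = ⊥) ∧
     (l ≤ adim A → S ⊓ A ≠ ⊥ ∧ adim (S ⊓ A) = adim A - l))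

section PolytopeFaces

/-- The cone of feasible directions of a convex set `P` at a point `x`. -/
def feasibleCone (P : Set V) (hP : Convex ℝ P) (x : V) (hx : x ∈ P) : PointedCone ℝ V where
  carrier := {g | ∃ ε : ℝ, 0 < ε ∧ x + ε • g ∈ P}
  zero_mem' := ⟨1, one_pos, by simpa using hx⟩
  add_mem' := by
    rintro g g' ⟨ε, hε, h⟩ ⟨δ, hδ, h'⟩
    have hs : 0 < ε + δ := add_pos hε hδ
    refine ⟨ε * δ / (ε + δ), by positivity, ?_⟩
    have := hP h h' (a := δ / (ε + δ)) (b := ε / (ε + δ)) (by positivity) (by positivity)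
      (by field_simp; ring)
    convert this using 1
    match_scalars <;> field_simp
    ring
  smul_mem' := by
    rintro ⟨c, hc⟩ g ⟨ε, hε, h⟩
    rcases hc.eq_or_lt with rfl | hc'
    · exact ⟨1, one_pos, by simpa [Nonneg.mk_smul] using hx⟩
    · refine ⟨ε / c, by positivity, ?_⟩
      rw [Nonneg.mk_smul, smul_smul, div_mul_cancel₀ _ hc'.ne']
      exact h

/-- The largest linear subspace contained in a pointed cone. -/
def linealitySpace (C : PointedCone ℝ V) : Submodule ℝ V where
  carrier := {g | g ∈ C ∧ -g ∈ C}
  zero_mem' := by simp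
  add_mem' := by
    rintro g g' ⟨h1, h2⟩ ⟨h3, h4⟩
    refine ⟨add_mem h1 h3, ?_⟩
    rw [neg_add]
    exact add_mem h2 h4
  smul_mem' := by
    rintro c g ⟨h1, h2⟩
    rcases le_total 0 c with hc | hc
    · refine ⟨C.smul_mem hc h1, ?_⟩
      rw [← smul_neg]
      exact C.smul_mem hc h2
    · have hc' : 0 ≤ -c := neg_nonneg.2 hc
      refine ⟨?_, ?_⟩
      · rw [← neg_smul_neg]
        exact C.smul_mem hc' h2
      · rw [← neg_smul]
        exact C.smul_mem hc' h1

theorem convex_diff_linealitySpace (C : PointedCone ℝ V) :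
    Convex ℝ ((C : Set V) \ linealitySpace C) := by
  have key : ∀ g ∈ C, ∀ g' ∈ C, g + g' ∈ linealitySpace C → g ∈ linealitySpace C := by
    intro g hg g' hg' h
    refine ⟨hg, ?_⟩
    have := add_mem h.2 hg'
    rwa [neg_add, neg_add_cancel_right] at this
  rintro g ⟨hg, hgL⟩ g' ⟨hg', hgL'⟩ a b ha hb hab
  have h1 : a • g ∈ C := C.smul_mem ha hg
  have h2 : b • g' ∈ C := C.smul_mem hb hg'
  refine ⟨add_mem h1 h2, fun h => ?_⟩
  rcases ha.eq_or_lt with rfl | ha'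
  · obtain rfl : b = 1 := by linarith
    exact hgL' (by simpa using h)
  · exact hgL (((linealitySpace C).smul_mem_iff ha'.ne').1 (key _ h1 _ h2 h))

theorem convex_neg_or_mem (f : V →ₗ[ℝ] ℝ) (L : Submodule ℝ V) (hf : ∀ g ∈ L, f g = 0) :
    Convex ℝ {g | f g < 0 ∨ g ∈ L} := by
  have nonpos : ∀ g, (f g < 0 ∨ g ∈ L) → f g ≤ 0 := by
    rintro g (h | h)
    exacts [h.le, (hf g h).le]
  intro g hg g' hg' a b ha hb hab
  have h1 := nonpos g hg
  have h2 := nonpos g' hg'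
  rcases ha.eq_or_lt with rfl | ha'
  · obtain rfl : b = 1 := by linarith
    simpa using hg'
  rcases hb.eq_or_lt with rfl | hb'
  · obtain rfl : a = 1 := by linarith
    simpa using hg
  by_cases hL : g ∈ L ∧ g' ∈ L
  · exact Or.inr (add_mem (L.smul_mem _ hL.1) (L.smul_mem _ hL.2))
  · left
    have h3 : f g < 0 ∨ f g' < 0 := by
      rw [Set.mem_ofPred_eq] at hg hg'
      tauto
    simp only [map_add, map_smul, smul_eq_mul]
    rcases h3 with h3 | h3 <;> nlinarith

/-- A linear form bounded below on a subspace vanishes on it. -/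
theorem eq_zero_of_bddBelow_on_submodule (f : V →ₗ[ℝ] ℝ) (L : Submodule ℝ V) (c : ℝ)
    (h : ∀ g ∈ L, c < f g) : ∀ g ∈ L, f g = 0 := by
  intro g hg
  by_contra hne
  have := h _ (L.smul_mem (c / f g) hg)
  rw [map_smul, smul_eq_mul, div_mul_cancel₀ _ hne] at this
  exact lt_irrefl _ this

/-- Every point of a polytope lies in the relative interior of some exposed face. -/
theorem exists_isExposed_mem_relative_interior {E : Type*} [NormedAddCommGroup E]
    [NormedSpace ℝ E] [FiniteDimensional ℝ E] (t : Finset E) {x : E}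
    (hx : x ∈ convexHull ℝ (t : Set E)) :
    ∃ G, IsExposed ℝ (convexHull ℝ (t : Set E)) G ∧ x ∈ G ∧
      ∀ g ∈ (affineSpan ℝ G).direction, ∃ ε : ℝ, 0 < ε ∧
        x + ε • g ∈ convexHull ℝ (t : Set E) ∧ x - ε • g ∈ convexHull ℝ (t : Set E) := by
  classical
  set P := convexHull ℝ (t : Set E) with hPdef
  have hP : Convex ℝ P := convex_convexHull ℝ _
  set C := feasibleCone P hP x hx
  set L := linealitySpace C
  set K : Set E := (fun v => v - x) '' {v | v ∈ t ∧ v - x ∉ L}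
  have hKfin : K.Finite := (t.finite_toSet.subset fun v hv => hv.1).image _
  have hKC : convexHull ℝ K ⊆ (C : Set E) \ L := by
    refine convexHull_min ?_ (convex_diff_linealitySpace C)
    rintro _ ⟨v, ⟨hv, hvL⟩, rfl⟩
    exact ⟨⟨1, one_pos, by simpa using subset_convexHull ℝ _ hv⟩, hvL⟩
  obtain ⟨f, u, w, hfK, huw, hfL⟩ := geometric_hahn_banach_compact_closed
    (convex_convexHull ℝ K) (hKfin.isCompact_convexHull (𝕜 := ℝ)) L.convex
    L.closed_of_finiteDimensional
    (Set.disjoint_left.2 fun g hg hgL => (hKC hg).2 hgL)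
  have hf0 : ∀ g ∈ L, f g = 0 :=
    eq_zero_of_bddBelow_on_submodule (f : E →ₗ[ℝ] ℝ) L w hfL
  have hw : w < 0 := by simpa using hfL 0 L.zero_mem
  have hPf : ∀ p ∈ P, f (p - x) < 0 ∨ p - x ∈ L := by
    have hconv : Convex ℝ ((fun p => -x + p) ⁻¹' {g | (f : E →ₗ[ℝ] ℝ) g < 0 ∨ g ∈ L}) :=
      (convex_neg_or_mem (f : E →ₗ[ℝ] ℝ) L hf0).translate_preimage_right (-x)
    have : P ⊆ (fun p => -x + p) ⁻¹' {g | (f : E →ₗ[ℝ] ℝ) g < 0 ∨ g ∈ L} := by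
      refine convexHull_min (fun v hv => ?_) hconv
      simp only [Set.mem_preimage, Set.mem_ofPred_eq, neg_add_eq_sub]
      by_cases hvL : v - x ∈ L
      · exact Or.inr hvL
      · left
        have := hfK (v - x) (subset_convexHull ℝ _ ⟨v, ⟨hv, hvL⟩, rfl⟩)
        exact this.trans (huw.trans hw)
    intro p hp
    simpa [neg_add_eq_sub] using this hp
  have hxG : x ∈ f.toExposed P := by
    refine ⟨hx, fun p hp => ?_⟩
    have h : f (p - x) ≤ 0 := (hPf p hp).elim le_of_lt fun h => (hf0 _ h).le
    rw [map_sub] at h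
    linarith
  refine ⟨f.toExposed P, ContinuousLinearMap.toExposed.isExposed, hxG, fun g hg => ?_⟩
  have hgL : g ∈ L := by
    rw [direction_affineSpan, vectorSpan_eq_span_vsub_set_right ℝ hxG] at hg
    refine Submodule.span_le.2 ?_ hg
    rintro _ ⟨p, hp, rfl⟩
    refine (hPf p hp.1).resolve_left fun h => ?_
    have := hp.2 x hx
    rw [map_sub] at h
    linarith
  obtain ⟨⟨ε, hε, h⟩, ⟨δ, hδ, h'⟩⟩ := hgL
  have hseg : ∀ (e : E) (a b : ℝ), 0 < b → 0 < a → x + a • e ∈ P → x + (min a b) • e ∈ P := by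
    intro e a b hb ha he
    have hm : min a b / a ≤ 1 := (div_le_one ha).2 (min_le_left _ _)
    have := hP.add_smul_mem hx he (t := min a b / a) ⟨by positivity, hm⟩
    rwa [smul_smul, div_mul_cancel₀ _ ha.ne'] at this
  refine ⟨min ε δ, lt_min hε hδ, hseg g ε δ hδ hε h, ?_⟩
  have := hseg (-g) δ ε hε hδ h'
  rwa [min_comm, smul_neg, ← sub_eq_add_neg] at this

/-- A linear form that is maximal on `B` at every point of `B` vanishes on the direction of the
affine span of `B`. -/
theorem map_direction_affineSpan_eq_zero (f : V →ₗ[ℝ] ℝ) {B : Set V}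
    (h : ∀ x ∈ B, ∀ y ∈ B, f y ≤ f x) {g : V} (hg : g ∈ (affineSpan ℝ B).direction) :
    f g = 0 := by
  rw [direction_affineSpan] at hg
  refine (Submodule.span_le (p := LinearMap.ker f)).2 ?_ hg
  rintro _ ⟨p, hp, q, hq, rfl⟩
  simp only [vsub_eq_sub, SetLike.mem_coe, LinearMap.mem_ker, map_sub]
  linarith [h p hp q hq, h q hq p hp]

/-- An exposed face contained in another one of the same dimension is equal to it. -/
theorem IsExposed.eq_of_subset_of_adim_eq {E : Type*} [NormedAddCommGroup E]
    [NormedSpace ℝ E] [FiniteDimensional ℝ E] {P B B' : Set E} (hB : IsExposed ℝ P B)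
    (hB' : IsExposed ℝ P B') (hne : B.Nonempty) (hsub : B ⊆ B')
    (hd : adim (affineSpan ℝ B) = adim (affineSpan ℝ B')) : B = B' := by
  obtain ⟨x, hx⟩ := hne
  have hdir : (affineSpan ℝ B).direction = (affineSpan ℝ B').direction :=
    Submodule.eq_of_le_of_finrank_eq (AffineSubspace.direction_le (affineSpan_mono ℝ hsub)) hd
  obtain ⟨f, hf⟩ := hB ⟨x, hx⟩
  have hxmax : ∀ y ∈ P, f y ≤ f x := by
    rw [hf] at hx
    exact hx.2
  refine hsub.antisymm fun p hp => ?_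
  have hpx : p - x ∈ (affineSpan ℝ B).direction := by
    rw [hdir]
    exact AffineSubspace.vsub_mem_direction (subset_affineSpan ℝ _ hp)
      (subset_affineSpan ℝ _ (hsub hx))
  have h0 := map_direction_affineSpan_eq_zero (f : E →ₗ[ℝ] ℝ) (B := B) (fun a ha b hb => by
    rw [hf] at ha
    exact ha.2 b (hB.subset hb)) hpx
  have h1 : f p = f x := by
    have : f (p - x) = 0 := h0
    rwa [map_sub, sub_eq_zero] at this
  rw [hf]
  exact ⟨hB'.subset hp, fun y hy => (hxmax y hy).trans h1.ge⟩

/-- If `A ≤ A'` are both in general position with respect to `S` and meet `S` in a common point,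
then the directions of `S ⊓ A'` and `A` span the direction of `A'`. -/
theorem GenPos.direction_inf_sup_direction [FiniteDimensional ℝ V] {l : ℕ}
    {S A A' : AffineSubspace ℝ V} (hA : GenPos l S A) (hA' : GenPos l S A') (hle : A ≤ A')
    {x : V} (hxS : x ∈ S) (hxA : x ∈ A) :
    (S ⊓ A').direction ⊔ A.direction = A'.direction := by
  have hge : l ≤ adim A := by
    by_contra hlt
    have h : x ∈ S ⊓ A := ⟨hxS, hxA⟩
    rw [(hA ⟨x, hxA⟩).1 (not_le.1 hlt)] at h
    exact AffineSubspace.notMem_bot ℝ V x h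
  have hmono : adim A ≤ adim A' := Submodule.finrank_mono (AffineSubspace.direction_le hle)
  have h1 := ((hA ⟨x, hxA⟩).2 hge).2
  have h2 := ((hA' ⟨x, hle hxA⟩).2 (hge.trans hmono)).2
  have hinf : (S ⊓ A').direction ⊓ A.direction = (S ⊓ A).direction := by
    have hxSA : x ∈ S ⊓ A' := ⟨hxS, hle hxA⟩
    rw [← AffineSubspace.direction_inf_of_mem hxSA hxA, inf_assoc, inf_eq_right.2 hle]
  refine Submodule.eq_of_le_of_finrank_eq (sup_le (AffineSubspace.direction_le inf_le_right)
    (AffineSubspace.direction_le hle)) ?_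
  have h3 := Submodule.finrank_sup_add_finrank_inf_eq (S ⊓ A').direction A.direction
  rw [hinf] at h3
  unfold adim at *
  omega

end PolytopeFaces

/-- Let `P ⊂ ℝ^n` be an `n`-dimensional polytope with `0` in its interior, `S` a linear
subspace of codimension `l ∈ {1,…,n−1}` in general position with respect to (intersections of)
the affine hulls of the faces of `P`, and `j ∈ {0,…,n−l−1}`. If `B₁ ≠ B₂` are
`(j+l)`-dimensional faces of `P` and `B₁ ∩ S ≠ ∅`, then `B₁ ∩ S ≠ B₂ ∩ S`. -/
theorem stmt17 (n l j : ℕ) (hl1 : 1 ≤ l) (hln : l ≤ n - 1) (hj : j ≤ n - l - 1)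
    (P : Set (Fin n → ℝ)) (hP : ∃ t : Finset (Fin n → ℝ), P = convexHull ℝ (t : Set (Fin n → ℝ)))
    (hPdim : adim (affineSpan ℝ P) = n) (h0 : (0 : Fin n → ℝ) ∈ interior P)
    (S : AffineSubspace ℝ (Fin n → ℝ)) (hS0 : (0 : Fin n → ℝ) ∈ S)
    (hSdim : adim S = n - l)
    (hgp : ∀ G : Finset (Set (Fin n → ℝ)), (∀ F ∈ G, IsExposed ℝ P F) →
      GenPos l S (⨅ F ∈ G, affineSpan ℝ F))
    (B1 B2 : Set (Fin n → ℝ)) (hB1 : IsExposed ℝ P B1) (hB2 : IsExposed ℝ P B2)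
    (hd1 : adim (affineSpan ℝ B1) = j + l) (hd2 : adim (affineSpan ℝ B2) = j + l)
    (hne : B1 ≠ B2) (hB1S : (B1 ∩ (S : Set (Fin n → ℝ))).Nonempty) :
    B1 ∩ (S : Set (Fin n → ℝ)) ≠ B2 ∩ (S : Set (Fin n → ℝ)) := by
  intro heq
  obtain ⟨t, rfl⟩ := hP
  set P := convexHull ℝ (t : Set (Fin n → ℝ)) with hPdef
  obtain ⟨x, hx1, hxS⟩ := hB1S
  have hx2 : x ∈ B2 := (heq.subset ⟨hx1, hxS⟩).1
  obtain ⟨y, hy1, hy2⟩ : ∃ y ∈ B1, y ∉ B2 := Set.not_subset.1 fun hsub =>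
    hne (hB1.eq_of_subset_of_adim_eq hB2 ⟨x, hx1⟩ hsub (hd1.trans hd2.symm))
  obtain ⟨f, hf⟩ := hB1 ⟨x, hx1⟩
  obtain ⟨h, hh⟩ := hB2 ⟨x, hx2⟩
  have hfmax : ∀ p ∈ P, f p ≤ f x := (hf.subset hx1).2
  have hhmax : ∀ p ∈ P, h p ≤ h x := (hh.subset hx2).2
  have hxP : x ∈ P := hB1.subset hx1
  have hyP : y ∈ P := hB1.subset hy1
  have hfy : f y = f x := le_antisymm (hfmax y hyP) ((hf.subset hy1).2 x hxP)
  have hhy : h y < h x := by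
    by_contra hcon
    exact hy2 (hh.superset ⟨hyP, fun p hp => (hhmax p hp).trans (not_lt.1 hcon)⟩)
  obtain ⟨G, hG, hxG, hGint⟩ := exists_isExposed_mem_relative_interior t hxP
  have hfG : ∀ g ∈ (affineSpan ℝ G).direction, f g = 0 := by
    intro g hg
    obtain ⟨ε, hε, h1, h2⟩ := hGint g hg
    have h3 := hfmax _ h1
    have h4 := hfmax _ h2
    simp only [map_add, map_sub, map_smul, smul_eq_mul] at h3 h4
    have h5 : ε * f g = 0 := by linarith
    exact (mul_eq_zero.1 h5).resolve_left hε.ne'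
  have hGB : G ⊆ B1 := by
    intro p hp
    have h1 := hfG (p - x) (AffineSubspace.vsub_mem_direction (subset_affineSpan ℝ _ hp)
      (subset_affineSpan ℝ _ hxG))
    rw [map_sub, sub_eq_zero] at h1
    exact hf.superset ⟨hG.subset hp, fun q hq => (hfmax q hq).trans h1.ge⟩
  have hgen : ∀ F, IsExposed ℝ P F → GenPos l S (affineSpan ℝ F) := fun F hF => by
    simpa using hgp {F} (by simpa using hF)
  have hdir := (hgen G hG).direction_inf_sup_direction (hgen B1 hB1) (affineSpan_mono ℝ hGB)
    hxS (subset_affineSpan ℝ _ hxG)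
  have hyx : y - x ∈ (affineSpan ℝ B1).direction :=
    AffineSubspace.vsub_mem_direction (subset_affineSpan ℝ _ hy1) (subset_affineSpan ℝ _ hx1)
  rw [← hdir] at hyx
  obtain ⟨s, hs, g, hg, hsg⟩ := Submodule.mem_sup.1 hyx
  obtain ⟨ε, hε, -, hxg⟩ := hGint g hg
  obtain rfl : y = x + s + g := by rw [add_assoc, hsg]; abel
  have hε1 : 0 < 1 + ε := by linarith
  set z := x + (ε / (1 + ε)) • s with hz
  have hzconv : z = (1 / (1 + ε)) • (x - ε • g) + (ε / (1 + ε)) • (x + s + g) := by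
    rw [hz]
    match_scalars <;> field_simp
    ring
  have hzP : z ∈ P := by
    rw [hzconv]
    exact convex_convexHull ℝ _ hxg hyP (by positivity) (by positivity) (by field_simp)
  have hzS : z ∈ S := by
    rw [hz, add_comm]
    exact AffineSubspace.vadd_mem_of_mem_direction (Submodule.smul_mem _ _
      (AffineSubspace.direction_le inf_le_left hs)) hxS
  have hfs : f s = 0 := by
    have := hfG g hg
    simp only [map_add] at hfy
    linarith
  have hfz : f z = f x := by simp [hz, hfs]
  have hz1 : z ∈ B1 := hf.superset ⟨hzP, fun q hq => (hfmax q hq).trans hfz.ge⟩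
  have hz2 : z ∈ B2 := (heq.subset ⟨hz1, hzS⟩).1
  have h1 : h x ≤ h z := (hh.subset hz2).2 x hxP
  have h2 := hhmax _ hxg
  simp only [hz, map_add, map_sub, map_smul, smul_eq_mul] at h1 h2 hhy
  have h3 : h s < 0 := by nlinarith
  have h4 : ε / (1 + ε) * h s < 0 := mul_neg_of_pos_of_neg (by positivity) h3
  linarith
end
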